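/- If E and F are finite-dimensional normed spaces of the same dimension and T : AC(X,E) → AC(Y,F) is a separating linear bijection, then the support map h : Y → X is a homeomorphism. -/

import Mathlib

open Set

def AbsCont {E : Type*} [NormedAddCommGroup E] {X : Set ℝ} (f : X → E) : Prop :=
  ∀ ε > (0 : ℝ), ∃ δ > (0 : ℝ), ∀ n : ℕ, ∀ a b : Fin n → X,
    (∀ i, (a i : ℝ) < b i) →
    (∀ i j, i ≠ j → Disjoint (Set.Ioo (a i : ℝ) (b i)) (Set.Ioo (a j : ℝ) (b j))) →
    (∑ i, ((b i : ℝ) - a i)) < δ →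
    (∑ i, ‖f (b i) - f (a i)‖) < ε

/-- `T` is separating on absolutely continuous functions: disjoint cozero sets are
mapped to disjoint cozero sets. -/
def Separating {E F : Type*} [NormedAddCommGroup E] [NormedAddCommGroup F]
    {X Y : Set ℝ} (T : (X → E) → (Y → F)) : Prop :=
  ∀ f g : X → E, AbsCont f → AbsCont g → (∀ x, f x = 0 ∨ g x = 0) →
    ∀ y, T f y = 0 ∨ T g y = 0

/-- `x ∈ supp(δ_y ∘ T)`: every open neighborhood `U` of `x` admits an absolutely
continuous `f` with cozero set contained in `U` and `T f y ≠ 0`. -/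
def InSupp {E F : Type*} [NormedAddCommGroup E] [NormedAddCommGroup F]
    {X Y : Set ℝ} (T : (X → E) → (Y → F)) (y : Y) (x : X) : Prop :=
  ∀ U : Set X, IsOpen U → x ∈ U →
    ∃ f : X → E, AbsCont f ∧ (∀ z, f z ≠ 0 → z ∈ U) ∧ T f y ≠ 0


theorem sum_clamp_le {X : Set ℝ} {n : ℕ} (a b : Fin n → X)
    (hlt : ∀ i, (a i : ℝ) < b i)
    (hd : ∀ i j, i ≠ j → Disjoint (Set.Ioo (a i : ℝ) (b i)) (Set.Ioo (a j : ℝ) (b j)))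
    (c d : ℝ) (hcd : c ≤ d) :
    ∑ i, (max c (min (b i : ℝ) d) - max c (min (a i : ℝ) d)) ≤ d - c := by
  have hm : ∀ i, max c (min (a i : ℝ) d) ≤ max c (min (b i : ℝ) d) := fun i =>
    max_le_max le_rfl (min_le_min (hlt i).le le_rfl)
  have hsub : ∀ i, Set.Ioo (max c (min (a i : ℝ) d)) (max c (min (b i : ℝ) d)) ⊆
      Set.Ioo (a i : ℝ) (b i) := by
    intro i t ht
    obtain ⟨h1, h2⟩ := ht
    simp only [max_lt_iff, lt_max_iff, lt_min_iff, min_lt_iff] at h1 h2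
    constructor <;> grind
  have hvol := MeasureTheory.measure_biUnion_finset (μ := MeasureTheory.volume)
    (s := (Finset.univ : Finset (Fin n)))
    (f := fun i => Set.Ioo (max c (min (a i : ℝ) d)) (max c (min (b i : ℝ) d)))
    (fun i _ j _ hij => (hd i j hij).mono (hsub i) (hsub j))
    (fun i _ => measurableSet_Ioo)
  have hle : MeasureTheory.volume (⋃ i ∈ (Finset.univ : Finset (Fin n)),
      Set.Ioo (max c (min (a i : ℝ) d)) (max c (min (b i : ℝ) d))) ≤
      MeasureTheory.volume (Set.Icc c d) := by
    apply MeasureTheory.measure_mono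
    intro t ht
    simp only [Set.mem_iUnion] at ht
    obtain ⟨i, _, h1, h2⟩ := ht
    refine ⟨(le_max_left _ _).trans h1.le, h2.le.trans (max_le hcd (min_le_right _ _))⟩
  rw [hvol] at hle
  simp only [Real.volume_Ioo, Real.volume_Icc] at hle
  rw [← ENNReal.ofReal_sum_of_nonneg (fun i _ => sub_nonneg.2 (hm i))] at hle
  exact (ENNReal.ofReal_le_ofReal_iff (sub_nonneg.2 hcd)).1 hle

theorem AbsCont.finset {E : Type*} [NormedAddCommGroup E] {X : Set ℝ} {f : X → E}
    (hf : AbsCont f) : ∀ ε > (0 : ℝ), ∃ δ > (0 : ℝ), ∀ n : ℕ, ∀ a b : Fin n → X,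
    ∀ s : Finset (Fin n), 
    (∀ i, (a i : ℝ) < b i) →
    (∀ i j, i ≠ j → Disjoint (Set.Ioo (a i : ℝ) (b i)) (Set.Ioo (a j : ℝ) (b j))) →
    (∑ i ∈ s, ((b i : ℝ) - a i)) < δ →
    (∑ i ∈ s, ‖f (b i) - f (a i)‖) < ε := by
  intro ε hε
  obtain ⟨δ, hδ, H⟩ := hf ε hε
  refine ⟨δ, hδ, fun n a b s hlt hd hs => ?_⟩
  have key : ∀ u : Fin n → ℝ, ∑ i ∈ s, u i = ∑ k : Fin s.card, u (s.equivFin.symm k) := by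
    intro u
    rw [← Finset.sum_coe_sort s]
    exact (Equiv.sum_comp s.equivFin.symm (fun i : s => u i)).symm
  rw [key] at hs ⊢
  refine H s.card (fun k => a (s.equivFin.symm k)) (fun k => b (s.equivFin.symm k))
    (fun k => hlt _) (fun i j hij => hd _ _ ?_) hs
  intro hh
  exact hij (s.equivFin.symm.injective (Subtype.ext hh))

theorem AbsCont.dist_lt {E : Type*} [NormedAddCommGroup E] {X : Set ℝ} {f : X → E}
    (hf : AbsCont f) : ∀ ε > (0 : ℝ), ∃ δ > (0 : ℝ), ∀ a b : X, dist a b < δ →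
      ‖f a - f b‖ < ε := by
  intro ε hε
  obtain ⟨δ, hδ, H⟩ := hf ε hε
  refine ⟨δ, hδ, ?_⟩
  have key : ∀ a b : X, (a : ℝ) < b → (b : ℝ) - a < δ → ‖f b - f a‖ < ε := by
    intro a b hab hl
    have := H 1 (fun _ => a) (fun _ => b) (fun _ => hab)
      (fun i j hij => absurd (Subsingleton.elim i j) hij) (by simpa using hl)
    simpa using this
  intro a b hab
  rw [Subtype.dist_eq, Real.dist_eq, abs_lt] at hab
  rcases lt_trichotomy (a : ℝ) b with h | h | h
  · rw [norm_sub_rev]; exact key a b h (by linarith)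
  · rw [Subtype.ext h]; simpa using hε
  · exact key b a h (by linarith)

theorem AbsCont.continuous {E : Type*} [NormedAddCommGroup E] {X : Set ℝ} {f : X → E}
    (hf : AbsCont f) : Continuous f := by
  rw [Metric.continuous_iff]
  intro b ε hε
  obtain ⟨δ, hδ, H⟩ := hf.dist_lt ε hε
  exact ⟨δ, hδ, fun a ha => by rw [dist_eq_norm]; exact H a b ha⟩

theorem AbsCont.of_lip {E : Type*} [NormedAddCommGroup E] {X : Set ℝ} {f : X → E}
    (C : ℝ) (hC : ∀ a b : X, ‖f b - f a‖ ≤ C * |(b : ℝ) - a|) : AbsCont f := by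
  intro ε hε
  refine ⟨ε / (|C| + 1), by positivity, fun n a b hlt hd hs => ?_⟩
  calc ∑ i, ‖f (b i) - f (a i)‖ ≤ ∑ i, (|C| + 1) * ((b i : ℝ) - a i) := by
        refine Finset.sum_le_sum fun i _ => (hC _ _).trans ?_
        rw [abs_of_pos (sub_pos.2 (hlt i))]
        exact mul_le_mul_of_nonneg_right (by linarith [le_abs_self C]) (sub_pos.2 (hlt i)).le
    _ = (|C| + 1) * ∑ i, ((b i : ℝ) - a i) := by rw [Finset.mul_sum]
    _ < (|C| + 1) * (ε / (|C| + 1)) := by gcongr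
    _ = ε := by field_simp

theorem AbsCont.const' {E : Type*} [NormedAddCommGroup E] {X : Set ℝ} (e : E) :
    AbsCont (fun _ : X => e) := AbsCont.of_lip 0 (by simp)

theorem AbsCont.add' {E : Type*} [NormedAddCommGroup E] {X : Set ℝ} {f g : X → E}
    (hf : AbsCont f) (hg : AbsCont g) : AbsCont (f + g) := by
  intro ε hε
  obtain ⟨δ, hδ, H⟩ := hf (ε / 2) (half_pos hε)
  obtain ⟨δ', hδ', H'⟩ := hg (ε / 2) (half_pos hε)
  refine ⟨min δ δ', lt_min hδ hδ', fun n a b hlt hd hs => ?_⟩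
  have h1 := H n a b hlt hd (hs.trans_le (min_le_left _ _))
  have h2 := H' n a b hlt hd (hs.trans_le (min_le_right _ _))
  calc ∑ i, ‖(f + g) (b i) - (f + g) (a i)‖
      ≤ ∑ i, (‖f (b i) - f (a i)‖ + ‖g (b i) - g (a i)‖) := by
        refine Finset.sum_le_sum fun i _ => ?_
        rw [Pi.add_apply, Pi.add_apply, add_sub_add_comm]
        exact norm_add_le _ _
    _ < ε := by rw [Finset.sum_add_distrib]; linarith

theorem AbsCont.smul' {𝕜 : Type*} [RCLike 𝕜] {E : Type*} [NormedAddCommGroup E]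
    [NormedSpace 𝕜 E] {X : Set ℝ} {φ : X → 𝕜} {f : X → E}
    (hφ : AbsCont φ) (hf : AbsCont f) {M N : ℝ} (hM : ∀ x, ‖φ x‖ ≤ M) (hN : ∀ x, ‖f x‖ ≤ N) :
    AbsCont (fun x => φ x • f x) := by
  intro ε hε
  obtain ⟨δ, hδ, H⟩ := hf (ε / 2 / (|M| + 1)) (by positivity)
  obtain ⟨δ', hδ', H'⟩ := hφ (ε / 2 / (|N| + 1)) (by positivity)
  refine ⟨min δ δ', lt_min hδ hδ', fun n a b hlt hd hs => ?_⟩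
  have h1 := H n a b hlt hd (hs.trans_le (min_le_left _ _))
  have h2 := H' n a b hlt hd (hs.trans_le (min_le_right _ _))
  rw [lt_div_iff₀ (by positivity)] at h1 h2
  calc ∑ i, ‖φ (b i) • f (b i) - φ (a i) • f (a i)‖
      ≤ ∑ i, (‖f (b i) - f (a i)‖ * (|M| + 1) + ‖φ (b i) - φ (a i)‖ * (|N| + 1)) := by
        refine Finset.sum_le_sum fun i _ => ?_
        have : φ (b i) • f (b i) - φ (a i) • f (a i) =
          φ (b i) • (f (b i) - f (a i)) + (φ (b i) - φ (a i)) • f (a i) := by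
          rw [smul_sub, sub_smul]; abel
        rw [this]
        refine (norm_add_le _ _).trans ?_
        rw [norm_smul, norm_smul, mul_comm ‖φ (b i)‖]
        gcongr
        · linarith [hM (b i), le_abs_self M]
        · linarith [hN (a i), le_abs_self N]
    _ < ε := by rw [Finset.sum_add_distrib, ← Finset.sum_mul, ← Finset.sum_mul]; linarith

theorem AbsCont.bdd {E : Type*} [NormedAddCommGroup E] {X : Set ℝ} (hX : IsCompact X)
    {f : X → E} (hf : AbsCont f) : ∃ N : ℝ, ∀ x, ‖f x‖ ≤ N := by
  have := isCompact_iff_compactSpace.1 hX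
  obtain ⟨N, hN⟩ := isCompact_univ.exists_bound_of_continuousOn hf.continuous.continuousOn
  exact ⟨N, fun x => hN x (Set.mem_univ _)⟩

theorem AbsCont.csmul {𝕜 : Type*} [RCLike 𝕜] {E : Type*} [NormedAddCommGroup E]
    [NormedSpace 𝕜 E] {X : Set ℝ} (hX : IsCompact X) (c : 𝕜) {f : X → E}
    (hf : AbsCont f) : AbsCont (c • f) := by
  obtain ⟨N, hN⟩ := hf.bdd hX
  exact AbsCont.smul' (AbsCont.const' c) hf (fun _ => le_rfl) hN

theorem AbsCont.lip_smul {𝕜 : Type*} [RCLike 𝕜] {E : Type*} [NormedAddCommGroup E]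
    [NormedSpace 𝕜 E] {X : Set ℝ} (φ : ℝ → ℝ) (C : ℝ) (hC : ∀ s t, |φ s - φ t| ≤ C * |s - t|)
    (w : E) : AbsCont (fun x : X => ((φ x : ℝ) : 𝕜) • w) := by
  refine AbsCont.of_lip (C * ‖w‖) fun a b => ?_
  rw [← sub_smul, ← RCLike.ofReal_sub, norm_smul, RCLike.norm_ofReal, mul_right_comm]
  gcongr
  exact hC _ _

theorem cutoff_exists {𝕜 : Type*} [RCLike 𝕜] {E : Type*} [NormedAddCommGroup E]
    [NormedSpace 𝕜 E] {X : Set ℝ} (hX : IsCompact X) {f : X → E} (hf : AbsCont f)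
    (x : X) (hx : f x = 0) (ρ ε : ℝ) (hρ : 0 < ρ) (hε : 0 < ε) :
    ∃ g : X → E, AbsCont g ∧ (∀ z, ρ ≤ dist z x → g z = 0) ∧
      (∃ r > 0, ∀ z, dist z x < r → g z = f z) ∧ (∀ z, ‖g z‖ ≤ ε) ∧
      (∀ n : ℕ, ∀ a b : Fin n → X, (∀ i, (a i : ℝ) < b i) →
        (∀ i j, i ≠ j → Disjoint (Set.Ioo (a i : ℝ) (b i)) (Set.Ioo (a j : ℝ) (b j))) →
        ∑ i, ‖g (b i) - g (a i)‖ ≤ ε) := by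
  obtain ⟨δ₁, hδ₁, H₁⟩ := hf.dist_lt (ε / 5) (by positivity)
  obtain ⟨δ₂, hδ₂, H₂⟩ := hf.finset (ε / 5) (by positivity)
  obtain ⟨r, hr, hr1, hr2, hr3⟩ : ∃ r > 0, 4 * r < δ₁ ∧ 4 * r < δ₂ ∧ 2 * r < ρ := by
    refine ⟨min (min δ₁ δ₂) ρ / 8, by positivity, ?_, ?_, ?_⟩
    · have : min (min δ₁ δ₂) ρ ≤ δ₁ := (min_le_left _ _).trans (min_le_left _ _)
      linarith
    · have : min (min δ₁ δ₂) ρ ≤ δ₂ := (min_le_left _ _).trans (min_le_right _ _)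
      linarith
    · have : min (min δ₁ δ₂) ρ ≤ ρ := min_le_right _ _
      linarith
  obtain ⟨p, hp⟩ : ∃ p : ℝ, p = (x : ℝ) := ⟨_, rfl⟩
  set φ : ℝ → ℝ := fun t => max 0 (min 1 (2 - |t - p| / r)) with hφ
  have φ0 : ∀ t, 0 ≤ φ t := fun t => le_max_left _ _
  have φ1 : ∀ t, φ t ≤ 1 := fun t => max_le zero_le_one (min_le_left _ _)
  have φout : ∀ t, 2 * r ≤ |t - p| → φ t = 0 := by
    intro t ht
    refine max_eq_left ((min_le_right _ _).trans ?_)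
    have := (le_div_iff₀ hr).2 ht
    linarith
  have φin : ∀ t, |t - p| ≤ r → φ t = 1 := by
    intro t ht
    have h1 : |t - p| / r ≤ 1 := (div_le_one hr).2 ht
    simp only [hφ]
    rw [min_eq_left (by linarith), max_eq_right zero_le_one]
  have φlip : ∀ s t, |φ s - φ t| ≤ (1 / r) * |s - t| := by
    intro s t
    have h1 : |(2 - |s - p| / r) - (2 - |t - p| / r)| ≤ (1 / r) * |s - t| := by
      have : (2 - |s - p| / r) - (2 - |t - p| / r) = (1 / r) * (|t - p| - |s - p|) := by ring
      rw [this, abs_mul, abs_of_pos (by positivity : 0 < 1 / r)]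
      refine mul_le_mul_of_nonneg_left ?_ (by positivity)
      refine (abs_abs_sub_abs_le _ _).trans ?_
      rw [abs_sub_comm s t]
      apply le_of_eq; congr 1; ring
    refine le_trans ?_ h1
    refine (abs_max_sub_max_le_max _ _ _ _).trans ?_
    rw [sub_self, abs_zero, max_eq_right (abs_nonneg _)]
    refine (abs_min_sub_min_le_max _ _ _ _).trans ?_
    rw [sub_self, abs_zero, max_eq_right (abs_nonneg _)]
  have φcl : ∀ t, φ (max (p - 2 * r) (min t (p + 2 * r))) = φ t := by
    intro t
    rcases le_total t (p - 2 * r) with h | h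
    · rw [min_eq_left (by linarith), max_eq_left h, φout, φout]
      · rw [le_abs]; right; linarith
      · rw [le_abs]; right; linarith
    · rcases le_total t (p + 2 * r) with h' | h'
      · rw [min_eq_left h', max_eq_right h]
      · rw [min_eq_right h', max_eq_right (by linarith), φout, φout]
        · rw [le_abs]; left; linarith
        · rw [le_abs]; left; linarith
  have fsmall : ∀ z : X, |(z : ℝ) - p| ≤ 2 * r → ‖f z‖ ≤ ε / 5 := by
    intro z hz
    have := H₁ z x (by rw [Subtype.dist_eq, Real.dist_eq, ← hp]; linarith)
    rw [hx, sub_zero] at this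
    exact this.le
  have nφ : ∀ t, ‖((φ t : ℝ) : 𝕜)‖ = φ t := fun t => by
    rw [RCLike.norm_ofReal, abs_of_nonneg (φ0 t)]
  obtain ⟨N, hN⟩ := hf.bdd hX
  refine ⟨fun z => ((φ z : ℝ) : 𝕜) • f z, ?_, ?_, ?_, ?_, ?_⟩
  · refine AbsCont.smul' (M := 1) ?_ hf (fun z => by rw [nφ]; exact φ1 _) hN
    refine AbsCont.of_lip (1 / r) fun a b => ?_
    rw [← RCLike.ofReal_sub, RCLike.norm_ofReal]
    exact φlip _ _
  · intro z hz
    rw [Subtype.dist_eq, Real.dist_eq, ← hp] at hz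
    simp [φout z (by linarith)]
  · refine ⟨r, hr, fun z hz => ?_⟩
    rw [Subtype.dist_eq, Real.dist_eq, ← hp] at hz
    simp [φin z hz.le]
  · intro z
    simp only [norm_smul, nφ]
    rcases le_total |(z : ℝ) - p| (2 * r) with h | h
    · calc φ z * ‖f z‖ ≤ 1 * (ε / 5) := by
            gcongr
            · exact φ1 _
            · exact fsmall z h
        _ ≤ ε := by linarith
    · rw [φout z h, zero_mul]; exact hε.le
  · intro n a b hlt hd
    classical
    set s : Finset (Fin n) := Finset.univ.filter
      (fun i => |(a i : ℝ) - p| ≤ 2 * r ∧ |(b i : ℝ) - p| ≤ 2 * r) with hs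
    set cl : ℝ → ℝ := fun t => max (p - 2 * r) (min t (p + 2 * r)) with hcl
    have clmono : ∀ i, cl (a i) ≤ cl (b i) := fun i =>
      max_le_max le_rfl (min_le_min (hlt i).le le_rfl)
    have clsum : ∑ i, (cl (b i) - cl (a i)) ≤ 4 * r := by
      have := sum_clamp_le a b hlt hd (p - 2 * r) (p + 2 * r) (by linarith)
      refine this.trans (by linarith)
    have clid : ∀ t, |t - p| ≤ 2 * r → cl t = t := by
      intro t ht
      rw [abs_le] at ht
      simp only [hcl]
      rw [min_eq_left (by linarith), max_eq_right (by linarith)]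
    have ssum : ∑ i ∈ s, ((b i : ℝ) - a i) < δ₂ := by
      refine lt_of_le_of_lt ?_ hr2
      refine le_trans ?_ clsum
      have : ∑ i ∈ s, ((b i : ℝ) - a i) = ∑ i ∈ s, (cl (b i) - cl (a i)) := by
        refine Finset.sum_congr rfl fun i hi => ?_
        simp only [hs, Finset.mem_filter, Finset.mem_univ, true_and] at hi
        rw [clid _ hi.1, clid _ hi.2]
      rw [this]
      exact Finset.sum_le_sum_of_subset_of_nonneg (Finset.subset_univ _)
        (fun i _ _ => sub_nonneg.2 (clmono i))
    have h1 := H₂ n a b s hlt hd ssum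
    have hφd : ∀ i, |φ (b i) - φ (a i)| ≤ (1 / r) * (cl (b i) - cl (a i)) := by
      intro i
      rw [← φcl (b i), ← φcl (a i)]
      refine (φlip _ _).trans (le_of_eq ?_)
      rw [abs_of_nonneg (sub_nonneg.2 (clmono i))]
    have hterm : ∀ i, ‖((φ (b i) : ℝ) : 𝕜) • f (b i) - ((φ (a i) : ℝ) : 𝕜) • f (a i)‖ ≤
        (if i ∈ s then ‖f (b i) - f (a i)‖ else 0) + (ε / 5) * |φ (b i) - φ (a i)| := by
      intro i
      by_cases hi : i ∈ s
      · rw [if_pos hi]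
        simp only [hs, Finset.mem_filter, Finset.mem_univ, true_and] at hi
        have : ((φ (b i) : ℝ) : 𝕜) • f (b i) - ((φ (a i) : ℝ) : 𝕜) • f (a i) =
          ((φ (b i) : ℝ) : 𝕜) • (f (b i) - f (a i)) +
            ((φ (b i) - φ (a i) : ℝ) : 𝕜) • f (a i) := by
          rw [smul_sub, RCLike.ofReal_sub, sub_smul]; abel
        rw [this]
        refine (norm_add_le _ _).trans ?_
        rw [norm_smul, norm_smul, nφ, RCLike.norm_ofReal, mul_comm (ε / 5)]
        have h2 := fsmall _ hi.1
        have h3 := φ1 (b i)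
        have h4 := norm_nonneg (f (b i) - f (a i))
        gcongr
        nlinarith
      · rw [if_neg hi, zero_add]
        simp only [hs, Finset.mem_filter, Finset.mem_univ, true_and, not_and_or, not_le] at hi
        rcases hi with hi | hi
        · rw [φout _ hi.le]
          simp only [RCLike.ofReal_zero, zero_smul, sub_zero, norm_smul, nφ, abs_of_nonneg (φ0 _)]
          rcases le_total |(b i : ℝ) - p| (2 * r) with h | h
          · nlinarith [fsmall _ h, φ0 (b i)]
          · rw [φout _ h]; simp
        · rw [φout _ hi.le]
          simp only [RCLike.ofReal_zero, zero_smul, zero_sub, norm_neg, abs_neg, norm_smul, nφ,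
            abs_of_nonneg (φ0 _)]
          rcases le_total |(a i : ℝ) - p| (2 * r) with h | h
          · nlinarith [fsmall _ h, φ0 (a i)]
          · rw [φout _ h]; simp
    calc ∑ i, ‖((φ (b i) : ℝ) : 𝕜) • f (b i) - ((φ (a i) : ℝ) : 𝕜) • f (a i)‖
        ≤ ∑ i, ((if i ∈ s then ‖f (b i) - f (a i)‖ else 0) +
          (ε / 5) * ((1 / r) * (cl (b i) - cl (a i)))) := by
          refine Finset.sum_le_sum fun i _ => (hterm i).trans ?_
          gcongr
          exact hφd i
      _ = ∑ i ∈ s, ‖f (b i) - f (a i)‖ + (ε / 5) * ((1 / r) * ∑ i, (cl (b i) - cl (a i))) := by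
          rw [Finset.sum_add_distrib, Finset.mul_sum, Finset.mul_sum]
          simp
      _ ≤ ε / 5 + (ε / 5) * ((1 / r) * (4 * r)) := by gcongr
      _ = ε := by field_simp; ring

theorem AbsCont.tsum' {E : Type*} [NormedAddCommGroup E] [CompleteSpace E] {X : Set ℝ}
    (g : ℕ → X → E) (hg : ∀ k, AbsCont (g k)) (hb : ∀ k z, ‖g k z‖ ≤ (1 / 2 : ℝ) ^ k)
    (hv : ∀ k, ∀ n : ℕ, ∀ a b : Fin n → X, (∀ i, (a i : ℝ) < b i) →
        (∀ i j, i ≠ j → Disjoint (Set.Ioo (a i : ℝ) (b i)) (Set.Ioo (a j : ℝ) (b j))) →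
        ∑ i, ‖g k (b i) - g k (a i)‖ ≤ (1 / 2 : ℝ) ^ k) :
    AbsCont (fun z => ∑' k, g k z) := by
  have hgeo : Summable (fun k : ℕ => (1 / 2 : ℝ) ^ k) := summable_geometric_two
  have hsm : ∀ z, Summable (fun k => g k z) := fun z =>
    Summable.of_norm_bounded hgeo (fun k => hb k z)
  intro ε hε
  obtain ⟨N, hN⟩ : ∃ N, ∑' k, (1 / 2 : ℝ) ^ (k + N) < ε / 2 :=
    ((tendsto_sum_nat_add (fun k : ℕ => (1 / 2 : ℝ) ^ k)).eventually
      (gt_mem_nhds (half_pos hε))).exists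
  have hfin : ∀ M, AbsCont (fun z => ∑ k ∈ Finset.range M, g k z) := by
    intro M
    induction M with
    | zero => simpa using AbsCont.const' (0 : E)
    | succ m ih =>
      simp only [Finset.sum_range_succ]
      exact ih.add' (hg m)
  obtain ⟨δ, hδ, H⟩ := hfin N (ε / 2) (half_pos hε)
  refine ⟨δ, hδ, fun n a b hlt hd hs => ?_⟩
  have h1 := H n a b hlt hd hs
  have hgeoN : Summable (fun k : ℕ => (1 / 2 : ℝ) ^ (k + N)) := (summable_nat_add_iff N).2 hgeo
  have hle : ∀ k i, ‖g k (b i) - g k (a i)‖ ≤ (1 / 2 : ℝ) ^ k := fun k i =>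
    (Finset.single_le_sum (f := fun i => ‖g k (b i) - g k (a i)‖)
      (fun _ _ => norm_nonneg _) (Finset.mem_univ i)).trans (hv k n a b hlt hd)
  have hsd : ∀ i, Summable (fun k => ‖g (k + N) (b i) - g (k + N) (a i)‖) := fun i =>
    Summable.of_nonneg_of_le (fun _ => norm_nonneg _) (fun k => hle (k + N) i) hgeoN
  have hterm : ∀ i, ‖∑' k, g k (b i) - ∑' k, g k (a i)‖ ≤
      ‖∑ k ∈ Finset.range N, g k (b i) - ∑ k ∈ Finset.range N, g k (a i)‖ +
      ∑' k, ‖g (k + N) (b i) - g (k + N) (a i)‖ := by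
    intro i
    rw [← (hsm (b i)).sum_add_tsum_nat_add N, ← (hsm (a i)).sum_add_tsum_nat_add N,
      add_sub_add_comm, ← ((summable_nat_add_iff N).2 (hsm (b i))).tsum_sub
        ((summable_nat_add_iff N).2 (hsm (a i)))]
    refine (norm_add_le _ _).trans ?_
    gcongr
    exact norm_tsum_le_tsum_norm (hsd i)
  have htail : ∑ i, ∑' k, ‖g (k + N) (b i) - g (k + N) (a i)‖ ≤ ∑' k, (1 / 2 : ℝ) ^ (k + N) := by
    rw [← Summable.tsum_finsetSum (fun i _ => hsd i)]
    exact Summable.tsum_le_tsum (fun k => hv (k + N) n a b hlt hd)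
      (summable_sum (fun i _ => hsd i)) hgeoN
  calc ∑ i, ‖∑' k, g k (b i) - ∑' k, g k (a i)‖ ≤ _ := Finset.sum_le_sum fun i _ => hterm i
    _ < ε := by rw [Finset.sum_add_distrib]; linarith

theorem exists_sep_seq {X : Set ℝ} (hX : IsCompact X) (B : Set X) (hB : B.Infinite) :
    ∃ (x : ℕ → X) (r : ℕ → ℝ), (∀ k, x k ∈ B) ∧ (∀ k, 0 < r k) ∧
      ∀ j k, j ≠ k → ∀ z, dist z (x j) < r j → r k ≤ dist z (x k) := by
  have := isCompact_iff_compactSpace.1 hX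
  obtain ⟨p, hp⟩ := hB.exists_accPt_principal
  have hne : ∀ ε > (0 : ℝ), ∃ x ∈ B, x ≠ p ∧ dist x p < ε := by
    intro ε hε
    rw [accPt_iff_nhds] at hp
    obtain ⟨y, hy, hyp⟩ := hp _ (Metric.ball_mem_nhds p hε)
    exact ⟨y, hy.2, hyp, hy.1⟩
  have hnext : ∀ u : {x : X // x ∈ B ∧ x ≠ p}, ∃ v : {x : X // x ∈ B ∧ x ≠ p},
      dist v.1 p < dist u.1 p / 3 := by
    intro u
    obtain ⟨x, hx, hxp, hd⟩ := hne (dist u.1 p / 3) (div_pos (dist_pos.2 u.2.2) (by norm_num))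
    exact ⟨⟨x, hx, hxp⟩, hd⟩
  choose nx hnx using hnext
  obtain ⟨x₀, hx₀, hxp₀, _⟩ := hne 1 one_pos
  set u : ℕ → {x : X // x ∈ B ∧ x ≠ p} := fun k => nx^[k] ⟨x₀, hx₀, hxp₀⟩ with hu
  have hpos : ∀ k, 0 < dist (u k).1 p := fun k => dist_pos.2 (u k).2.2
  have hstep : ∀ k, dist (u (k + 1)).1 p < dist (u k).1 p / 3 := by
    intro k
    simp only [hu, Function.iterate_succ_apply']
    exact hnx _
  have hanti : ∀ j m, dist (u (j + 1 + m)).1 p < dist (u j).1 p / 3 := by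
    intro j m
    induction m with
    | zero => exact hstep j
    | succ m ih =>
      have := hstep (j + 1 + m)
      have := hpos (j + 1 + m)
      rw [← add_assoc]
      linarith
  have hlt : ∀ j k, j < k → dist (u k).1 p < dist (u j).1 p / 3 := by
    intro j k hjk
    obtain ⟨m, rfl⟩ := Nat.exists_eq_add_of_le (Nat.succ_le_of_lt hjk)
    exact hanti j m
  refine ⟨fun k => (u k).1, fun k => dist (u k).1 p / 2, fun k => (u k).2.1,
    fun k => half_pos (hpos k), fun j k hjk z hz => ?_⟩
  have t1 := dist_triangle z (u j).1 p
  have t2 := dist_triangle z (u k).1 p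
  have t3 := dist_triangle_left (u j).1 p z
  have t4 := dist_triangle_left (u k).1 p z
  rcases lt_or_gt_of_ne hjk with h | h
  · have := hlt j k h
    simp only at hz ⊢
    linarith
  · have := hlt k j h
    simp only at hz ⊢
    linarith

/-- Theorem 3.2: the support map of a separating bijection between spaces of
absolutely continuous functions with values in finite-dimensional spaces of the
same dimension is a homeomorphism. -/
theorem support_map_homeomorph {𝕜 : Type*} [RCLike 𝕜]
    {E F : Type*} [NormedAddCommGroup E] [NormedSpace 𝕜 E]
    [NormedAddCommGroup F] [NormedSpace 𝕜 F]
    {n : ℕ} [FiniteDimensional 𝕜 E] [FiniteDimensional 𝕜 F]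
    (hdimE : Module.finrank 𝕜 E = n) (hdimF : Module.finrank 𝕜 F = n)
    {X Y : Set ℝ} (hX : IsCompact X) (hY : IsCompact Y)
    (T : (X → E) → (Y → F))
    (hadd : ∀ f g : X → E, T (f + g) = T f + T g)
    (hsmul : ∀ (c : 𝕜) (f : X → E), T (c • f) = c • T f)
    (hmaps : ∀ f : X → E, AbsCont f → AbsCont (T f))
    (hinj : ∀ f g : X → E, AbsCont f → AbsCont g → T f = T g → f = g)
    (hsurj : ∀ g : Y → F, AbsCont g → ∃ f : X → E, AbsCont f ∧ T f = g)
    (hsep : Separating T)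
    (h : Y → X) (hsupp : ∀ (y : Y) (x : X), InSupp T y x ↔ x = h y)
    (hcont : Continuous h) (honto : Function.Surjective h)
    (hvanish : ∀ (f : X → E), AbsCont f → ∀ U : Set X, IsOpen U →
      (∀ x ∈ U, f x = 0) → ∀ y : Y, h y ∈ U → T f y = 0) :
    ∃ H : Y ≃ₜ X, ⇑H = h := by
  classical
  have cX : CompactSpace X := isCompact_iff_compactSpace.1 hX
  have cY : CompactSpace Y := isCompact_iff_compactSpace.1 hY
  have : CompleteSpace E := FiniteDimensional.complete 𝕜 E
  have hT0 : T 0 = 0 := by simpa using hsmul 0 0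
  have hneg : ∀ f : X → E, T (-f) = - T f := fun f => by
    simpa using hsmul (-1) f
  have hsub : ∀ f g : X → E, T (f - g) = T f - T g := fun f g => by
    rw [sub_eq_add_neg, hadd, hneg, sub_eq_add_neg]
  have acsub : ∀ f g : X → E, AbsCont f → AbsCont g → AbsCont (f - g) := fun f g hf hg => by
    have := hf.add' (AbsCont.csmul hX (-1 : 𝕜) hg)
    simpa [sub_eq_add_neg] using this
  -- agreeing near `h y`
  have hloc : ∀ f g : X → E, AbsCont f → AbsCont g → ∀ y, ∀ r > 0,
      (∀ z, dist z (h y) < r → f z = g z) → T f y = T g y := by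
    intro f g hf hg y r hr hfg
    have := hvanish (f - g) (acsub f g hf hg) (Metric.ball (h y) r) Metric.isOpen_ball
      (fun z hz => by simp [hfg z hz]) y (Metric.mem_ball_self hr)
    rw [hsub] at this
    exact sub_eq_zero.1 this
  set D : Set Y := {y | ∃ f : X → E, AbsCont f ∧ f (h y) = 0 ∧ T f y ≠ 0} with hD
  have hDf : (h '' D).Finite := by
    by_contra hinf
    obtain ⟨x, r, hxB, hr, hdis⟩ := exists_sep_seq hX (h '' D) hinf
    choose y hyD hyx using hxB
    choose f₀ hf₀ hf₀0 hf₀T using hyD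
    -- rescale
    have hscale : ∀ k : ℕ, ∃ f : X → E, AbsCont f ∧ f (x k) = 0 ∧ (k : ℝ) ≤ ‖T f (y k)‖ := by
      intro k
      have hpos : 0 < ‖T (f₀ k) (y k)‖ := norm_pos_iff.2 (hf₀T k)
      refine ⟨(((k : ℝ) / ‖T (f₀ k) (y k)‖ : ℝ) : 𝕜) • f₀ k, AbsCont.csmul hX _ (hf₀ k), ?_, ?_⟩
      · rw [Pi.smul_apply, ← hyx k, hf₀0 k, smul_zero]
      · rw [hsmul, Pi.smul_apply, norm_smul, RCLike.norm_ofReal, abs_of_nonneg (by positivity),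
          div_mul_cancel₀ _ hpos.ne']
    choose f hf hfx hfT using hscale
    have hcut := fun k : ℕ => cutoff_exists (𝕜 := 𝕜) hX (hf k) (x k) (hfx k) (r k)
      ((1 / 2 : ℝ) ^ k) (hr k) (by positivity)
    choose g hg hgout hgin hgb hgv using hcut
    choose q hq hgq using hgin
    have hG := AbsCont.tsum' g hg hgb hgv
    have hGT : ∀ k, T (fun z => ∑' j, g j z) (y k) = T (f k) (y k) := by
      intro k
      refine hloc _ _ hG (hf k) (y k) (min (r k) (q k)) (lt_min (hr k) (hq k)) ?_
      intro z hz
      rw [hyx k] at hz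
      rw [← hgq k z (hz.trans_le (min_le_right _ _))]
      refine tsum_eq_single k fun j hj => ?_
      exact hgout j z (hdis k j hj.symm z (hz.trans_le (min_le_left _ _)))
    obtain ⟨N, hN⟩ := (hmaps _ hG).bdd hY
    obtain ⟨k, hk⟩ := exists_nat_gt N
    have h1 := hfT k
    rw [← hGT k] at h1
    linarith [hN (y k)]
  -- outside D, evaluation
  have hJ : ∀ y, y ∉ D → ∀ f : X → E, AbsCont f → T f y = T (fun _ => f (h y)) y := by
    intro y hy f hf
    by_contra hne
    refine hy ⟨f - (fun _ => f (h y)), acsub _ _ hf (AbsCont.const' _), by simp, ?_⟩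
    rw [hsub]
    exact sub_ne_zero.2 hne
  have hJinj : ∀ y, y ∉ D → ∀ f : X → E, AbsCont f → T f y = 0 → f (h y) = 0 := by
    intro y hy f hf hf0
    let J : E →ₗ[𝕜] F :=
      { toFun := fun e => T (fun _ => e) y
        map_add' := fun e e' => by
          have := congrFun (hadd (fun _ => e) (fun _ => e')) y
          exact this
        map_smul' := fun c e => by
          have := congrFun (hsmul c (fun _ => e)) y
          exact this }
    have hs : Function.Surjective J := by
      intro w
      obtain ⟨f', hf', hT'⟩ := hsurj (fun _ => w) (AbsCont.const' w)
      refine ⟨f' (h y), ?_⟩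
      change T (fun _ => f' (h y)) y = w
      rw [← hJ y hy f' hf', hT']
    have hi : Function.Injective J :=
      (LinearMap.injective_iff_surjective_of_finrank_eq_finrank (hdimE.trans hdimF.symm)).2 hs
    apply hi
    rw [map_zero]
    change T (fun _ => f (h y)) y = 0
    rw [← hJ y hy f hf, hf0]
  have hnt : ∀ y : Y, ∃ w : F, w ≠ 0 := by
    intro y
    obtain ⟨f, _, _, hf⟩ := (hsupp y (h y)).2 rfl Set.univ isOpen_univ trivial
    exact ⟨_, hf⟩
  have hdense : Dense (h ⁻¹' (h '' D))ᶜ := by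
    rw [← interior_eq_empty_iff_dense_compl, Set.eq_empty_iff_forall_notMem]
    intro y₀ hy₀
    rw [mem_interior_iff_mem_nhds, Metric.mem_nhds_iff] at hy₀
    obtain ⟨ρ, hρ, hball⟩ := hy₀
    obtain ⟨w, hw⟩ := hnt y₀
    have hg := AbsCont.lip_smul (𝕜 := 𝕜) (X := Y) (fun t => max 0 (ρ - |t - y₀|)) 1 (by
      intro s t
      refine (abs_max_sub_max_le_max _ _ _ _).trans ?_
      rw [sub_self, abs_zero, max_eq_right (abs_nonneg _), one_mul, sub_sub_sub_cancel_left]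
      refine (abs_abs_sub_abs_le _ _).trans ?_
      rw [abs_sub_comm s t]
      apply le_of_eq; congr 1; ring) w
    obtain ⟨f, hf, hTf⟩ := hsurj _ hg
    have hf1 : ∀ x, x ∉ h '' D → f x = 0 := by
      intro x hx
      obtain ⟨y, rfl⟩ := honto x
      refine hJinj y (fun hy => hx ⟨y, hy, rfl⟩) f hf ?_
      rw [hTf]
      have hnb : ¬ dist y y₀ < ρ := fun hlt => hx (hball hlt)
      rw [Subtype.dist_eq, Real.dist_eq, not_lt] at hnb
      simp [max_eq_left (sub_nonpos.2 hnb)]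
    have hf0 : f = 0 := by
      funext x
      by_contra hfx
      have hxB : x ∈ h '' D := by
        by_contra hx; exact hfx (hf1 x hx)
      have hopen : IsOpen ({z | f z ≠ 0} ∩ (h '' D \ {x})ᶜ) :=
        (isOpen_ne_fun hf.continuous continuous_const).inter
          (hDf.subset Set.diff_subset).isClosed.isOpen_compl
      have hsing : {z | f z ≠ 0} ∩ (h '' D \ {x})ᶜ ⊆ {x} := by
        rintro z ⟨hz1, hz2⟩
        have hzB : z ∈ h '' D := by
          by_contra hz; exact hz1 (hf1 z hz)
        by_contra hzx
        exact hz2 ⟨hzB, hzx⟩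
      obtain ⟨y, ⟨f', hf', hfz0, hfzT⟩, rfl⟩ := hxB
      refine hfzT (hvanish f' hf' _ hopen (fun z hz => ?_) y ⟨hfx, fun hc => hc.2 rfl⟩)
      rw [hsing hz, hfz0]
    rw [hf0, hT0] at hTf
    have := (congrFun hTf y₀).symm
    simp [max_eq_right hρ.le, hρ.ne', hw] at this
  -- uniform bound
  obtain ⟨C, hC⟩ : ∃ C : ℝ, ∀ (e : E) (y : Y), ‖T (fun _ => e) y‖ ≤ C * ‖e‖ := by
    let L : E →ₗ[𝕜] C(Y, F) :=
      { toFun := fun e => ⟨T (fun _ => e), (hmaps _ (AbsCont.const' e)).continuous⟩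
        map_add' := fun e e' => by
          ext y
          exact congrFun (hadd (fun _ => e) (fun _ => e')) y
        map_smul' := fun c e => by
          ext y
          exact congrFun (hsmul c (fun _ => e)) y }
    refine ⟨‖LinearMap.toContinuousLinearMap L‖, fun e y => ?_⟩
    exact ((L e).norm_coe_le_norm y).trans ((LinearMap.toContinuousLinearMap L).le_opNorm e)
  have hDe : ∀ y, y ∉ D := by
    rintro y ⟨f, hf, hf0, hfT⟩
    have hcl : IsClosed {y' : Y | ‖T f y'‖ ≤ C * ‖f (h y')‖} :=
      isClosed_le (hmaps f hf).continuous.norm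
        (continuous_const.mul (hf.continuous.comp hcont).norm)
    have hsubset : (h ⁻¹' (h '' D))ᶜ ⊆ {y' : Y | ‖T f y'‖ ≤ C * ‖f (h y')‖} := by
      intro y' hy'
      have hyD2 : y' ∉ D := fun hc => hy' ⟨y', hc, rfl⟩
      simp only [Set.mem_setOf_eq]
      rw [hJ y' hyD2 f hf]
      exact hC _ _
    have hall : y ∈ {y' : Y | ‖T f y'‖ ≤ C * ‖f (h y')‖} :=
      hcl.closure_subset_iff.2 hsubset (hdense y)
    simp only [Set.mem_setOf_eq, hf0, norm_zero, mul_zero] at hall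
    exact hfT (norm_le_zero_iff.1 hall)
  have hinjh : Function.Injective h := by
    intro y₁ y₂ h12
    by_contra hne
    obtain ⟨w, hw⟩ := hnt y₁
    have hg := AbsCont.lip_smul (𝕜 := 𝕜) (X := Y) (fun t => |t - y₁|) 1 (by
      intro s t
      rw [one_mul]
      refine (abs_abs_sub_abs_le _ _).trans ?_
      apply le_of_eq; congr 1; ring) w
    obtain ⟨f, hf, hTf⟩ := hsurj _ hg
    have h1 : f (h y₁) = 0 := hJinj y₁ (hDe y₁) f hf (by rw [hTf]; simp)
    have h2 : T f y₂ = 0 := by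
      by_contra hc
      exact hDe y₂ ⟨f, hf, h12 ▸ h1, hc⟩
    rw [hTf] at h2
    simp only [smul_eq_zero, hw, or_false, RCLike.ofReal_eq_zero, abs_eq_zero, sub_eq_zero] at h2
    exact hne (Subtype.ext h2).symm
  exact ⟨hcont.homeoOfEquivCompactToT2 (f := Equiv.ofBijective h ⟨hinjh, honto⟩), rfl⟩
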